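/- arXiv:1809.06525 — 5 statements merged into one kernel-verified Lean document; each statement's English description precedes it below -/
import Mathlib

section
/- Let H be a real Hilbert space, let β > 0, and let B : H → H be β-cocoercive. Let α > 0, let U : H → H be a bounded self-adjoint linear operator with ⟨Ux, x⟩ ≥ α‖x‖² for all x ∈ H, and let V : H → H be a bounded self-adjoint linear operator with V∘U = U∘V = id (so V = U⁻¹). Then U∘B is (β/‖U‖)-cocoercive with respect to the inner product ⟨x, y⟩_V := ⟨Vx, y⟩; that is, for all x, y ∈ H, ⟨V(U(Bx) − U(By)), x − y⟩ ≥ (β/‖U‖)·⟨V(U(Bx) − U(By)), U(Bx) − U(By)⟩. -/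
open RealInnerProductSpace

section

variable {H : Type*} [NormedAddCommGroup H] [InnerProductSpace ℝ H]

theorem real_inner_apply_self_le_opNorm_mul_norm_sq (U : H →L[ℝ] H) (x : H) :
    ⟪x, U x⟫ ≤ ‖U‖ * ‖x‖ ^ 2 :=
  calc
    ⟪x, U x⟫ ≤ ‖x‖ * ‖U x‖ := real_inner_le_norm x (U x)
    _ ≤ ‖x‖ * (‖U‖ * ‖x‖) := by gcongr; exact U.le_opNorm x
    _ = ‖U‖ * ‖x‖ ^ 2 := by ring

/-- For `U = 0` the left-hand side is the junk value `0`. -/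
theorem real_inner_apply_self_div_opNorm_le_norm_sq (U : H →L[ℝ] H) (x : H) :
    ⟪x, U x⟫ / ‖U‖ ≤ ‖x‖ ^ 2 :=
  div_le_of_le_mul₀ (norm_nonneg U) (sq_nonneg ‖x‖) <| by
    simpa only [mul_comm] using real_inner_apply_self_le_opNorm_mul_norm_sq U x

theorem variable_metric_cocoercive_general {β : ℝ} (hβ : 0 ≤ β) {B : H → H}
    (hB : ∀ x y : H, β * ‖B x - B y‖ ^ 2 ≤ ⟪x - y, B x - B y⟫)
    {U : H →L[ℝ] H} {V : H → H} (hVU : Function.LeftInverse V U) (x y : H) :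
    (β / ‖U‖) * ⟪V (U (B x) - U (B y)), U (B x) - U (B y)⟫ ≤
      ⟪V (U (B x) - U (B y)), x - y⟫ := by
  rw [← map_sub, hVU (B x - B y)]
  calc
    β / ‖U‖ * ⟪B x - B y, U (B x - B y)⟫ = β * (⟪B x - B y, U (B x - B y)⟫ / ‖U‖) := by ring
    _ ≤ β * ‖B x - B y‖ ^ 2 := by
      gcongr
      exact real_inner_apply_self_div_opNorm_le_norm_sq U (B x - B y)
    _ ≤ ⟪x - y, B x - B y⟫ := hB x y
    _ = ⟪B x - B y, x - y⟫ := real_inner_comm _ _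

end

/-- If `B` is `β`-cocoercive and `U` is a bounded self-adjoint operator with
`⟨Ux, x⟩ ≥ α‖x‖²` and inverse `V`, then `U ∘ B` is `(β/‖U‖)`-cocoercive with respect to the
inner product `⟨x, y⟩_V := ⟨Vx, y⟩`. -/
theorem variable_metric_cocoercive
    {H : Type*} [NormedAddCommGroup H] [InnerProductSpace ℝ H] [CompleteSpace H]
    (β : ℝ) (hβ : 0 < β) (B : H → H)
    (hB : ∀ x y : H, ⟪x - y, B x - B y⟫ ≥ β * ‖B x - B y‖ ^ 2)
    (α : ℝ) (hα : 0 < α) (U V : H →L[ℝ] H)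
    (hU : IsSelfAdjoint U)
    (hUpos : ∀ x : H, ⟪U x, x⟫ ≥ α * ‖x‖ ^ 2)
    (hV : IsSelfAdjoint V)
    (hVU : V.comp U = ContinuousLinearMap.id ℝ H)
    (hUV : U.comp V = ContinuousLinearMap.id ℝ H) :
    ∀ x y : H,
      ⟪V (U (B x) - U (B y)), x - y⟫ ≥
        (β / ‖U‖) * ⟪V (U (B x) - U (B y)), U (B x) - U (B y)⟫ :=
  variable_metric_cocoercive_general hβ.le hB (DFunLike.congr_fun hVU)
end

section
/- Let H be a real Hilbert space, let β > 0, and let B : H → H be β-cocoercive. Let α > 0, let U : H → H be a bounded self-adjoint linear operator with ⟨Ux, x⟩ ≥ α‖x‖² for all x ∈ H, and let V : H → H be a bounded self-adjoint linear operator with V∘U = U∘V = id. Then for every γ with 0 < γ < 2β/‖U‖, the map T := id − γ·(U∘B) is a-averaged with a := γ‖U‖/(2β) with respect to the norm ‖·‖_V; explicitly, for all x, y ∈ H, ‖Tx − Ty‖²_V ≤ ‖x − y‖²_V − ((1 − a)/a)·‖γ·U(Bx) − γ·U(By)‖²_V. -/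
open RealInnerProductSpace

/-!
For a symmetric operator `V`, expanding the square shows that `x ↦ x - G x` is `a`-averaged for
`⟪V ·, ·⟫` exactly when `G` is `1 / (2 * a)`-cocoercive for that form. For `G = γ • U ∘ B` the
factor `V` cancels `U`, and with `b = B x - B y` the condition becomes
`β * ⟪b, U b⟫ ≤ ‖U‖ * ⟪x - y, b⟫`, which follows from `⟪b, U b⟫ ≤ ‖U‖ * ‖b‖ ^ 2` and the
cocoercivity of `B`.
-/

section

variable {H : Type*} [NormedAddCommGroup H] [InnerProductSpace ℝ H]

theorem real_inner_map_self_le_opNorm_mul_norm_sq (U : H →L[ℝ] H) (b : H) :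
    ⟪b, U b⟫ ≤ ‖U‖ * ‖b‖ ^ 2 :=
  calc
    ⟪b, U b⟫ ≤ ‖b‖ * ‖U b‖ := real_inner_le_norm b (U b)
    _ ≤ ‖b‖ * (‖U‖ * ‖b‖) := by gcongr; exact U.le_opNorm b
    _ = ‖U‖ * ‖b‖ ^ 2 := by ring

theorem mul_real_inner_map_self_le_opNorm_mul_inner {β : ℝ} (hβ : 0 ≤ β) (U : H →L[ℝ] H)
    {d b : H} (hdb : β * ‖b‖ ^ 2 ≤ ⟪d, b⟫) :
    β * ⟪b, U b⟫ ≤ ‖U‖ * ⟪d, b⟫ :=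
  calc
    β * ⟪b, U b⟫ ≤ β * (‖U‖ * ‖b‖ ^ 2) := by
      gcongr; exact real_inner_map_self_le_opNorm_mul_norm_sq U b
    _ = ‖U‖ * (β * ‖b‖ ^ 2) := by ring
    _ ≤ ‖U‖ * ⟪d, b⟫ := by gcongr

theorem real_inner_map_sub_self_of_isSymmetric {V : H →ₗ[ℝ] H} (hV : V.IsSymmetric) (d e : H) :
    ⟪V (d - e), d - e⟫ = ⟪V d, d⟫ - 2 * ⟪d, V e⟫ + ⟪V e, e⟫ := by
  have cross : ⟪V e, d⟫ = ⟪d, V e⟫ := real_inner_comm d (V e)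
  rw [map_sub, inner_sub_left, inner_sub_right, inner_sub_right, hV d e, cross]
  ring

theorem real_inner_map_sub_self_le_iff_of_isSymmetric {V : H →ₗ[ℝ] H} (hV : V.IsSymmetric)
    {a : ℝ} (ha : 0 < a) (d e : H) :
    ⟪V (d - e), d - e⟫ ≤ ⟪V d, d⟫ - (1 - a) / a * ⟪V e, e⟫ ↔ ⟪V e, e⟫ ≤ 2 * a * ⟪d, V e⟫ := by
  have coeff : (1 - a) / a * ⟪V e, e⟫ = ⟪V e, e⟫ / a - ⟪V e, e⟫ := by field_simp
  have clear_div : ⟪V e, e⟫ / a ≤ 2 * ⟪d, V e⟫ ↔ ⟪V e, e⟫ ≤ 2 * a * ⟪d, V e⟫ := by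
    rw [div_le_iff₀ ha, mul_right_comm]
  rw [real_inner_map_sub_self_of_isSymmetric hV, coeff, ← clear_div]
  constructor <;> intro h <;> linarith

theorem real_inner_map_smul_self_le_of_leftInverse {β γ : ℝ} (hβ : 0 < β) {U : H →L[ℝ] H}
    {V : H →ₗ[ℝ] H} (hVU : Function.LeftInverse V U) {d b : H} (hdb : β * ‖b‖ ^ 2 ≤ ⟪d, b⟫) :
    ⟪V (γ • U b), γ • U b⟫ ≤ 2 * (γ * ‖U‖ / (2 * β)) * ⟪d, V (γ • U b)⟫ := by
  have key : ⟪b, U b⟫ ≤ ‖U‖ * ⟪d, b⟫ / β := by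
    rw [le_div_iff₀' hβ]
    exact mul_real_inner_map_self_le_opNorm_mul_inner hβ.le U hdb
  rw [map_smul, hVU b]
  calc
    ⟪γ • b, γ • U b⟫ = γ ^ 2 * ⟪b, U b⟫ := by
      rw [real_inner_smul_left, real_inner_smul_right]; ring
    _ ≤ γ ^ 2 * (‖U‖ * ⟪d, b⟫ / β) := by gcongr
    _ = 2 * (γ * ‖U‖ / (2 * β)) * ⟪d, γ • b⟫ := by
      rw [real_inner_smul_right]; field_simp

theorem variable_metric_forward_step_averaged_general {β γ : ℝ} (hβ : 0 < β) (hγ : 0 < γ)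
    {B : H → H} (hB : ∀ x y : H, β * ‖B x - B y‖ ^ 2 ≤ ⟪x - y, B x - B y⟫)
    {U : H →L[ℝ] H} (hU : U ≠ 0) {V : H →ₗ[ℝ] H} (hV : V.IsSymmetric)
    (hVU : Function.LeftInverse V U) (x y : H) :
    letI T : H → H := fun z => z - γ • U (B z)
    letI a : ℝ := γ * ‖U‖ / (2 * β)
    ⟪V (T x - T y), T x - T y⟫ ≤
      ⟪V (x - y), x - y⟫ -
        ((1 - a) / a) *
          ⟪V (γ • U (B x) - γ • U (B y)), γ • U (B x) - γ • U (B y)⟫ := by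
  have ha : 0 < γ * ‖U‖ / (2 * β) := by positivity
  have step_diff : γ • U (B x) - γ • U (B y) = γ • U (B x - B y) := by rw [map_sub, smul_sub]
  dsimp only
  rw [sub_sub_sub_comm, step_diff, real_inner_map_sub_self_le_iff_of_isSymmetric hV ha]
  exact real_inner_map_smul_self_le_of_leftInverse hβ hVU (hB x y)

end

/-- If `B` is `β`-cocoercive and `U` is a bounded self-adjoint operator with
`⟨Ux, x⟩ ≥ α‖x‖²` and inverse `V`, then for `0 < γ < 2β/‖U‖`, the map
`T := id − γ·(U∘B)` is `a`-averaged with `a := γ‖U‖/(2β)` with respect to `‖·‖_V`. -/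
theorem variable_metric_forward_step_averaged
    {H : Type*} [NormedAddCommGroup H] [InnerProductSpace ℝ H] [CompleteSpace H]
    (β : ℝ) (hβ : 0 < β) (B : H → H)
    (hB : ∀ x y : H, ⟪x - y, B x - B y⟫ ≥ β * ‖B x - B y‖ ^ 2)
    (α : ℝ) (hα : 0 < α) (U V : H →L[ℝ] H)
    (hU : IsSelfAdjoint U)
    (hUpos : ∀ x : H, ⟪U x, x⟫ ≥ α * ‖x‖ ^ 2)
    (hV : IsSelfAdjoint V)
    (hVU : V.comp U = ContinuousLinearMap.id ℝ H)
    (hUV : U.comp V = ContinuousLinearMap.id ℝ H) :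
    ∀ γ : ℝ, 0 < γ → γ < 2 * β / ‖U‖ →
      ∀ x y : H,
        letI T : H → H := fun z => z - γ • U (B z)
        letI a : ℝ := γ * ‖U‖ / (2 * β)
        ⟪V (T x - T y), T x - T y⟫ ≤
          ⟪V (x - y), x - y⟫ -
            ((1 - a) / a) *
              ⟪V (γ • U (B x) - γ • U (B y)), γ • U (B x) - γ • U (B y)⟫ := by
  intro γ hγ hγU
  have U_ne_zero : U ≠ 0 := by rintro rfl; simp [hγ.not_gt] at hγU
  exact variable_metric_forward_step_averaged_general hβ hγ hB U_ne_zero hV.isSymmetric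
    (DFunLike.congr_fun hVU)
end

section
/- Let H be a real Hilbert space, let β > 0, and let B : H → H be β-cocoercive. Let α > 0, let U : H → H be a bounded self-adjoint linear operator with ⟨Ux, x⟩ ≥ α‖x‖² for all x ∈ H, and let V : H → H be a bounded self-adjoint linear operator with V∘U = U∘V = id. Let J : H → H be firmly nonexpansive with respect to ‖·‖_V. Then for every γ with 0 < γ < 2β/‖U‖, the map T := J∘(id − γ·(U∘B)) is a-averaged with a := 2β/(4β − γ‖U‖) with respect to ‖·‖_V; explicitly, for all x, y ∈ H, ‖Tx − Ty‖²_V ≤ ‖x − y‖²_V − ((1 − a)/a)·‖(x − Tx) − (y − Ty)‖²_V. -/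
open RealInnerProductSpace

/-!
In the metric of `V = U⁻¹`, `U ∘ B` is `β/‖U‖`-cocoercive, so the forward step `id - γ U B` is
`γ‖U‖/(2β)`-averaged, while the firmly nonexpansive backward step `J` is `1/2`-averaged. The
constant `2β/(4β - γ‖U‖)` is what the sharp composition rule
`(a₁ + a₂ - 2a₁a₂)/(1 - a₁a₂)` of Ogura–Yamada and Combettes–Yamada gives for these two.
-/

section BilinForm

variable {E : Type*} [AddCommGroup E] [Module ℝ E] {φ : LinearMap.BilinForm ℝ E}

/-- `T` is `a`-averaged for the squared seminorm `z ↦ φ z z`. The notion is meant for `0 < a < 1`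
and positive semidefinite `φ`; neither is part of the predicate. -/
def IsAveraged (φ : LinearMap.BilinForm ℝ E) (a : ℝ) (T : E → E) : Prop :=
  ∀ x y, φ (T x - T y) (T x - T y) ≤
    φ (x - y) (x - y) - (1 - a) / a * φ ((x - T x) - (y - T y)) ((x - T x) - (y - T y))

/-- `C` is `c`-cocoercive for the semi-inner product `φ`. The notion is meant for `0 < c` and
positive semidefinite `φ`; neither is part of the predicate. -/
def IsCocoercive (φ : LinearMap.BilinForm ℝ E) (c : ℝ) (C : E → E) : Prop :=
  ∀ x y, c * φ (C x - C y) (C x - C y) ≤ φ (x - y) (C x - C y)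

theorem isAveraged_one_half_iff {T : E → E} :
    IsAveraged φ (1 / 2) T ↔ ∀ x y, φ (T x - T y) (T x - T y) ≤
      φ (x - y) (x - y) - φ ((x - T x) - (y - T y)) ((x - T x) - (y - T y)) := by
  have coeff : (1 - 1 / 2 : ℝ) / (1 / 2) = 1 := by norm_num
  simp only [IsAveraged, coeff, one_mul]

theorem bilinForm_smul_sub_smul_self (hφ : φ.IsSymm) (r s : ℝ) (p q : E) :
    φ (r • p - s • q) (r • p - s • q) = r ^ 2 * φ p p - 2 * r * s * φ p q + s ^ 2 * φ q q := by
  simp only [map_sub, map_smul, LinearMap.sub_apply, LinearMap.smul_apply, smul_eq_mul, hφ.eq q p]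
  ring

theorem harmonic_mul_bilinForm_add_self_le (hφ : φ.IsPosSemidef) {k l : ℝ} (hkl : 0 < k + l)
    (p q : E) : k * l / (k + l) * φ (p + q) (p + q) ≤ k * φ p p + l * φ q q := by
  have cross : 0 ≤ k ^ 2 * φ p p - 2 * k * l * φ p q + l ^ 2 * φ q q :=
    bilinForm_smul_sub_smul_self hφ.isSymm k l p q ▸ hφ.isNonneg.nonneg _
  have expand : φ (p + q) (p + q) = φ p p + 2 * φ p q + φ q q := by
    simp only [map_add, LinearMap.add_apply, hφ.isSymm.eq q p]
    ring
  rw [div_mul_eq_mul_div, div_le_iff₀ hkl, expand]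
  linarith

theorem IsAveraged.comp (hφ : φ.IsPosSemidef) {a₁ a₂ : ℝ} (ha₁ : a₁ ∈ Set.Ioo 0 1)
    (ha₂ : a₂ ∈ Set.Ioo 0 1) {T₁ T₂ : E → E} (h₁ : IsAveraged φ a₁ T₁) (h₂ : IsAveraged φ a₂ T₂) :
    IsAveraged φ ((a₁ + a₂ - 2 * a₁ * a₂) / (1 - a₁ * a₂)) (T₁ ∘ T₂) := by
  obtain ⟨ha₁_pos, ha₁_lt⟩ := ha₁
  obtain ⟨ha₂_pos, ha₂_lt⟩ := ha₂
  have den_pos : 0 < 1 - a₁ * a₂ := by nlinarith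
  have num_pos : 0 < a₁ + a₂ - 2 * a₁ * a₂ := by nlinarith
  set k₁ := (1 - a₁) / a₁ with hk₁
  set k₂ := (1 - a₂) / a₂ with hk₂
  have k_sum : k₂ + k₁ = (a₁ + a₂ - 2 * a₁ * a₂) / (a₁ * a₂) := by
    rw [hk₁, hk₂]
    field_simp
    ring
  have k_sum_pos : 0 < k₂ + k₁ := k_sum ▸ by positivity
  have coeff : (1 - (a₁ + a₂ - 2 * a₁ * a₂) / (1 - a₁ * a₂)) /
      ((a₁ + a₂ - 2 * a₁ * a₂) / (1 - a₁ * a₂)) = k₂ * k₁ / (k₂ + k₁) := by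
    rw [k_sum, hk₁, hk₂]
    field_simp
    ring
  intro x y
  have residual : (x - T₁ (T₂ x)) - (y - T₁ (T₂ y)) =
      ((x - T₂ x) - (y - T₂ y)) + ((T₂ x - T₁ (T₂ x)) - (T₂ y - T₁ (T₂ y))) := by abel
  simp only [coeff, Function.comp_apply]
  rw [residual]
  linarith [h₁ (T₂ x) (T₂ y), h₂ x y, harmonic_mul_bilinForm_add_self_le hφ k_sum_pos
    ((x - T₂ x) - (y - T₂ y)) ((T₂ x - T₁ (T₂ x)) - (T₂ y - T₁ (T₂ y)))]

theorem IsAveraged.one_half_comp (hφ : φ.IsPosSemidef) {a : ℝ} (ha : a ∈ Set.Ioo 0 1)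
    {J T : E → E} (hJ : IsAveraged φ (1 / 2) J) (hT : IsAveraged φ a T) :
    IsAveraged φ (1 / (2 - a)) (J ∘ T) := by
  have coeff : 1 / (2 - a) = (1 / 2 + a - 2 * (1 / 2) * a) / (1 - 1 / 2 * a) := by
    have : 2 - a ≠ 0 := by linarith [ha.2]
    have : 1 - 1 / 2 * a ≠ 0 := by linarith [ha.2]
    field_simp
    ring
  rw [coeff]
  exact hJ.comp hφ (by norm_num) ha hT

theorem IsCocoercive.isAveraged_sub_smul (hφ : φ.IsSymm) {c γ : ℝ} (hc : 0 < c) (hγ : 0 < γ)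
    {C : E → E} (hC : IsCocoercive φ c C) :
    IsAveraged φ (γ / (2 * c)) fun z => z - γ • C z := by
  intro x y
  have step : (x - γ • C x) - (y - γ • C y) = (1 : ℝ) • (x - y) - γ • (C x - C y) := by module
  have residual : (x - (x - γ • C x)) - (y - (y - γ • C y)) = γ • (C x - C y) := by module
  have coeff : (1 - γ / (2 * c)) / (γ / (2 * c)) * γ ^ 2 = 2 * γ * c - γ ^ 2 := by
    field_simp
  have cocoercive := mul_le_mul_of_nonneg_left (hC x y) (by positivity : 0 ≤ 2 * γ)
  simp only [step, residual, bilinForm_smul_sub_smul_self hφ, map_smul, LinearMap.smul_apply,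
    smul_eq_mul]
  linear_combination cocoercive + φ (C x - C y) (C x - C y) * coeff

end BilinForm

section InnerProductSpace

variable {H : Type*} [NormedAddCommGroup H] [InnerProductSpace ℝ H]

/-- The bilinear form `⟨x, y⟩_V = ⟨V x, y⟩`, so that `metricForm V z z` is `‖z‖²_V`. -/
noncomputable def metricForm (V : H →ₗ[ℝ] H) : LinearMap.BilinForm ℝ H :=
  innerₗ H ∘ₗ V

theorem isCocoercive_innerₗ_iff {β : ℝ} {B : H → H} :
    IsCocoercive (innerₗ H) β B ↔ ∀ x y, β * ‖B x - B y‖ ^ 2 ≤ ⟪x - y, B x - B y⟫ := by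
  simp only [IsCocoercive, innerₗ_apply_apply, real_inner_self_eq_norm_sq]

theorem isPosSemidef_metricForm {V : H →ₗ[ℝ] H} (hV : V.IsPositive) :
    (metricForm V).IsPosSemidef where
  eq x y := (hV.isSymmetric x y).trans (real_inner_comm _ _)
  nonneg x := hV.inner_nonneg_left x

theorem isPositive_of_leftInverse {U V : H →ₗ[ℝ] H} (hU : U.IsPositive)
    (hUV : Function.LeftInverse U V) : V.IsPositive := by
  refine ⟨fun x y => ?_, fun x => ?_⟩
  · calc ⟪V x, y⟫ = ⟪V x, U (V y)⟫ := by rw [hUV y]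
      _ = ⟪U (V x), V y⟫ := (hU.isSymmetric _ _).symm
      _ = ⟪x, V y⟫ := by rw [hUV x]
  · calc 0 ≤ ⟪V x, U (V x)⟫ := hU.inner_nonneg_right (V x)
      _ = ⟪V x, x⟫ := by rw [hUV x]

theorem inner_apply_self_le_opNorm_mul (U : H →L[ℝ] H) (z : H) : ⟪U z, z⟫ ≤ ‖U‖ * ‖z‖ ^ 2 :=
  calc ⟪U z, z⟫ ≤ ‖U z‖ * ‖z‖ := real_inner_le_norm _ _
    _ ≤ ‖U‖ * ‖z‖ * ‖z‖ := by gcongr; exact U.le_opNorm z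
    _ = ‖U‖ * ‖z‖ ^ 2 := by ring

theorem IsCocoercive.metricForm_comp {β : ℝ} (hβ : 0 ≤ β) {B : H → H}
    (hB : IsCocoercive (innerₗ H) β B) {U : H →L[ℝ] H} {V : H →ₗ[ℝ] H}
    (hU : (U : H →ₗ[ℝ] H).IsSymmetric) (hUV : Function.LeftInverse U V) :
    IsCocoercive (metricForm V) (β / ‖U‖) (U ∘ B) := by
  have metricForm_apply_right (p q : H) : metricForm V p (U q) = ⟪p, q⟫ :=
    calc ⟪V p, U q⟫ = ⟪U (V p), q⟫ := (hU _ _).symm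
      _ = ⟪p, q⟫ := by rw [hUV p]
  intro x y
  simp only [Function.comp_apply, ← map_sub, metricForm_apply_right]
  set d := B x - B y
  calc β / ‖U‖ * ⟪U d, d⟫ ≤ β / ‖U‖ * (‖U‖ * ‖d‖ ^ 2) := by
        gcongr
        exact inner_apply_self_le_opNorm_mul U d
    _ = ‖U‖ / ‖U‖ * (β * ‖d‖ ^ 2) := by ring
    _ ≤ β * ‖d‖ ^ 2 := mul_le_of_le_one_left (by positivity) (div_self_le_one _)
    _ ≤ ⟪x - y, d⟫ := isCocoercive_innerₗ_iff.1 hB x y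

theorem variable_metric_forward_backward_averaged_general {β γ : ℝ} (hβ : 0 < β) (hγ : 0 < γ)
    {B J : H → H} {U : H →L[ℝ] H} {V : H →ₗ[ℝ] H} (hB : IsCocoercive (innerₗ H) β B)
    (hU : U.IsPositive) (hUV : Function.LeftInverse U V)
    (hJ : IsAveraged (metricForm V) (1 / 2) J) (hγU : γ < 2 * β / ‖U‖) :
    IsAveraged (metricForm V) (2 * β / (4 * β - γ * ‖U‖)) fun z => J (z - γ • U (B z)) := by
  have hφ : (metricForm V).IsPosSemidef :=
    isPosSemidef_metricForm (isPositive_of_leftInverse hU.toLinearMap hUV)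
  have norm_pos : 0 < ‖U‖ :=
    (div_pos_iff_of_pos_left (by positivity)).1 (hγ.trans hγU)
  have forward : IsAveraged (metricForm V) (γ / (2 * (β / ‖U‖))) fun z => z - γ • U (B z) :=
    (hB.metricForm_comp hβ.le hU.isSymmetric hUV).isAveraged_sub_smul hφ.isSymm
      (by positivity) hγ
  have forward_mem : γ / (2 * (β / ‖U‖)) ∈ Set.Ioo 0 1 :=
    ⟨by positivity, by rwa [← mul_div_assoc, div_lt_one (by positivity)]⟩
  have coeff : 2 * β / (4 * β - γ * ‖U‖) = 1 / (2 - γ / (2 * (β / ‖U‖))) := by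
    have den : 2 - γ / (2 * (β / ‖U‖)) = (4 * β - γ * ‖U‖) / (2 * β) := by
      field_simp
      ring
    rw [den, one_div_div]
  rw [coeff]
  exact hJ.one_half_comp hφ forward_mem forward

end InnerProductSpace

/-- If `B` is `β`-cocoercive, `U` is a bounded self-adjoint operator with
`⟨Ux, x⟩ ≥ α‖x‖²` and inverse `V`, and `J` is firmly nonexpansive with respect to `‖·‖_V`,
then for `0 < γ < 2β/‖U‖`, the map `T := J ∘ (id − γ·(U∘B))` is `a`-averaged with
`a := 2β/(4β − γ‖U‖)` with respect to `‖·‖_V`. -/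
theorem variable_metric_forward_backward_averaged
    {H : Type*} [NormedAddCommGroup H] [InnerProductSpace ℝ H] [CompleteSpace H]
    (β : ℝ) (hβ : 0 < β) (B : H → H)
    (hB : ∀ x y : H, ⟪x - y, B x - B y⟫ ≥ β * ‖B x - B y‖ ^ 2)
    (α : ℝ) (hα : 0 < α) (U V : H →L[ℝ] H)
    (hU : IsSelfAdjoint U)
    (hUpos : ∀ x : H, ⟪U x, x⟫ ≥ α * ‖x‖ ^ 2)
    (hV : IsSelfAdjoint V)
    (hVU : V.comp U = ContinuousLinearMap.id ℝ H)
    (hUV : U.comp V = ContinuousLinearMap.id ℝ H)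
    (J : H → H)
    (hJ : ∀ x y : H,
      ⟪V (J x - J y), J x - J y⟫ ≤
        ⟪V (x - y), x - y⟫ - ⟪V ((x - J x) - (y - J y)), (x - J x) - (y - J y)⟫) :
    ∀ γ : ℝ, 0 < γ → γ < 2 * β / ‖U‖ →
      ∀ x y : H,
        letI T : H → H := fun z => J (z - γ • U (B z))
        letI a : ℝ := 2 * β / (4 * β - γ * ‖U‖)
        ⟪V (T x - T y), T x - T y⟫ ≤
          ⟪V (x - y), x - y⟫ -
            ((1 - a) / a) *
              ⟪V ((x - T x) - (y - T y)), (x - T x) - (y - T y)⟫ := by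
  exact fun γ hγ hγU =>
    variable_metric_forward_backward_averaged_general (V := (V : H →ₗ[ℝ] H)) hβ hγ
      (isCocoercive_innerₗ_iff.2 hB)
      ⟨hU.isSymmetric, fun x => (by positivity : 0 ≤ α * ‖x‖ ^ 2).trans (hUpos x)⟩
      (fun z => DFunLike.congr_fun hUV z) (isAveraged_one_half_iff.2 hJ) hγU
end

section
/- Let H be a real Hilbert space, let β > 0, let B : H → H be β-cocoercive, and let A : H → Set H be monotone. Let r > 0, s > 0, m > 0, and let U', V' : H → H be bounded self-adjoint linear operators with ⟨U'z, z⟩ ≥ m‖z‖² for all z ∈ H. Let x, p, q ∈ H satisfy (1/r)·U'(x − p) − B(x) ∈ A(p) and (1/s)·V'(x − q) − B(x) ∈ A(q) (so that p = T_{rU}x and q = T_{sV}x are values of the variable metric forward-backward operators with metrics U'⁻¹ = U and V'⁻¹ = V). Then ‖p − q‖ ≤ (1/m)·‖(U' − (r/s)·V')(x − q)‖. -/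
open RealInnerProductSpace

/-!
Put `w = U' (x - q) - (r / s) • V' (x - q)`. The forward terms `B x` cancel when the two inclusions
are subtracted, so monotonicity of `A` between `p` and `q`, multiplied by `r`, says
`⟪p - q, w - U' (p - q)⟫ ≥ 0`. Coercivity of `U'` then gives `m ‖p - q‖² ≤ ⟪w, p - q⟫`, and
Cauchy–Schwarz finishes. Below, `v` stands for `(1 / s) • V' (x - q)` and `b` for `B x`.
-/

section

variable {H F : Type*} [SeminormedAddCommGroup H] [InnerProductSpace ℝ H]

theorem mul_norm_le_norm_of_mul_norm_sq_le_inner {m : ℝ} {w z : H}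
    (h : m * ‖z‖ ^ 2 ≤ ⟪w, z⟫) : m * ‖z‖ ≤ ‖w‖ := by
  rcases (norm_nonneg z).eq_or_lt with hz | hz
  · simp [← hz]
  · refine le_of_mul_le_mul_right ?_ hz
    calc m * ‖z‖ * ‖z‖ = m * ‖z‖ ^ 2 := by ring
      _ ≤ ⟪w, z⟫ := h
      _ ≤ ‖w‖ * ‖z‖ := real_inner_le_norm w z

variable [FunLike F H H] [AddMonoidHomClass F H H]

theorem inner_map_sub_le_of_inner_nonneg (U : F) {r : ℝ} (hr : 0 < r) {x p q v : H}
    (h : 0 ≤ ⟪p - q, (1 / r) • U (x - p) - v⟫) :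
    ⟪U (p - q), p - q⟫ ≤ ⟪U (x - q) - r • v, p - q⟫ := by
  have split_map : U (x - q) = U (x - p) + U (p - q) := by
    rw [← map_add, sub_add_sub_cancel]
  have difference_eq :
      U (x - q) - r • v - U (p - q) = r • ((1 / r) • U (x - p) - v) := by
    rw [smul_sub, smul_smul, mul_one_div_cancel hr.ne', one_smul, split_map]
    abel
  rw [← sub_nonneg, ← inner_sub_left, difference_eq, real_inner_smul_left, real_inner_comm]
  exact mul_nonneg hr.le h

theorem forward_backward_metric_comparison_general {A : H → Set H}
    (hA : ∀ x y u v : H, u ∈ A x → v ∈ A y → ⟪x - y, u - v⟫ ≥ 0)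
    {r m : ℝ} (hr : 0 < r) (hm : 0 < m) (U : F) (hU : ∀ z : H, ⟪U z, z⟫ ≥ m * ‖z‖ ^ 2)
    {x p q b v : H} (hp : (1 / r) • U (x - p) - b ∈ A p) (hq : v - b ∈ A q) :
    ‖p - q‖ ≤ (1 / m) * ‖U (x - q) - r • v‖ := by
  have monotone_pair : 0 ≤ ⟪p - q, (1 / r) • U (x - p) - v⟫ := by
    simpa only [sub_sub_sub_cancel_right] using hA p q _ _ hp hq
  have coercive_bound : m * ‖p - q‖ ^ 2 ≤ ⟪U (x - q) - r • v, p - q⟫ :=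
    (hU (p - q)).trans (inner_map_sub_le_of_inner_nonneg U hr monotone_pair)
  rw [one_div, le_inv_mul_iff₀ hm]
  exact mul_norm_le_norm_of_mul_norm_sq_le_inner coercive_bound

end

/-- estimate for the distance between values of two variable metric
forward-backward operators with different metrics and step sizes. -/
theorem forward_backward_metric_comparison
    {H : Type*} [NormedAddCommGroup H] [InnerProductSpace ℝ H] [CompleteSpace H]
    (β : ℝ) (hβ : 0 < β) (B : H → H)
    (hB : ∀ x y : H, ⟪x - y, B x - B y⟫ ≥ β * ‖B x - B y‖ ^ 2)
    (A : H → Set H)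
    (hA : ∀ x y u v : H, u ∈ A x → v ∈ A y → ⟪x - y, u - v⟫ ≥ 0)
    (r s m : ℝ) (hr : 0 < r) (hs : 0 < s) (hm : 0 < m)
    (U' V' : H →L[ℝ] H)
    (hU' : IsSelfAdjoint U') (hV' : IsSelfAdjoint V')
    (hU'pos : ∀ z : H, ⟪U' z, z⟫ ≥ m * ‖z‖ ^ 2)
    (x p q : H)
    (hp : (1 / r) • U' (x - p) - B x ∈ A p)
    (hq : (1 / s) • V' (x - q) - B x ∈ A q) :
    ‖p - q‖ ≤ (1 / m) * ‖U' (x - q) - (r / s) • V' (x - q)‖ := by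
  simpa only [smul_smul, mul_one_div] using
    forward_backward_metric_comparison_general hA hr hm U' hU'pos hp hq
end

section
/- Under the hypotheses listed in the context, suppose in addition there exist λ̲ > 0 and τ > 0 with λ̲ ≤ λ_k ≤ 1/α_k − τ for all k, there exists γ̲ > 0 with γ_k ≥ γ̲ for all k, and there exists ε ∈ (0, 2β − μγ̲) with γ_k ≤ (2β − ε)/μ for all k. Then for every x* ∈ Ω, B x_k → B x* strongly in H as k → ∞. -/
open RealInnerProductSpace Filter

/-!
Fix a zero `z` of `A + B` and measure distances to `z` in the metric of `U k⁻¹`. Monotonicity of `A`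
and cocoercivity of `B` show that an exact relaxed step decreases the squared distance by at least
a fixed multiple of `‖B (x k) - B z‖²`: with `q` the displacement of the unrelaxed step, the
decrease is at least `λ (γ / (2β) (2β ‖B x - B z‖ - ‖q‖)² + κ ‖q‖²)`, where `κ > 0` comes from the
margin `τ`, and both squares can be small only if `‖B x - B z‖` is.
The errors and the change of metric multiply the squared distance by factors whose infinite product
converges and add a summable amount, so the decreases are summable.
-/

theorem le_of_sq_le_mul {R : Type*} [Semiring R] [LinearOrder R] [IsStrictOrderedRing R] {r s : R}
    (hs : 0 ≤ s) (h : r ^ 2 ≤ s * r) : r ≤ s := by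
  by_contra! hsr
  exact (mul_lt_mul_of_pos_right hsr (hs.trans_lt hsr)).not_ge (sq r ▸ h)

section QuasiFejer

variable {Q D c f : ℕ → ℝ}

theorem add_sum_range_le_prod_mul (hD : ∀ k, 0 ≤ D k) (hf : ∀ k, 0 ≤ f k) (hc : ∀ k, 1 ≤ c k)
    (h : ∀ k, Q (k + 1) + D k ≤ c k * (Q k + f k)) (n : ℕ) :
    Q n + ∑ i ∈ Finset.range n, D i ≤
      (∏ i ∈ Finset.range n, c i) * (Q 0 + ∑ i ∈ Finset.range n, f i) := by
  induction n with
  | zero => simp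
  | succ n ih =>
    simp only [Finset.sum_range_succ, Finset.prod_range_succ]
    set S := ∑ i ∈ Finset.range n, D i
    set P := ∏ i ∈ Finset.range n, c i
    set F := Q 0 + ∑ i ∈ Finset.range n, f i
    have hS : 0 ≤ S := Finset.sum_nonneg fun i _ => hD i
    have hP : 1 ≤ P := Finset.one_le_prod fun i _ => hc i
    have hcn : 0 ≤ c n := zero_le_one.trans (hc n)
    calc Q (n + 1) + (S + D n) = Q (n + 1) + D n + S := by ring
      _ ≤ c n * (Q n + f n) + c n * S := add_le_add (h n) (le_mul_of_one_le_left hS (hc n))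
      _ = c n * (Q n + S + f n) := by ring
      _ ≤ c n * (P * F + P * f n) := by
        gcongr
        exact le_mul_of_one_le_left (hf n) hP
      _ = P * c n * (Q 0 + (∑ i ∈ Finset.range n, f i + f n)) := by simp only [F]; ring

theorem summable_of_add_le_mul_add (hQ : ∀ k, 0 ≤ Q k) (hD : ∀ k, 0 ≤ D k) (hf : ∀ k, 0 ≤ f k)
    (hc : ∀ k, 1 ≤ c k) (hc_mul : Multipliable c) (hf_sum : Summable f)
    (h : ∀ k, Q (k + 1) + D k ≤ c k * (Q k + f k)) : Summable D := by
  obtain ⟨M, hM⟩ := hc_mul.hasProd.tendsto_prod_nat.bddAbove_range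
  refine summable_of_sum_range_le (c := M * (Q 0 + ∑' i, f i)) hD fun n => ?_
  have hsum_nonneg : 0 ≤ ∑ i ∈ Finset.range n, f i := Finset.sum_nonneg fun i _ => hf i
  have hprod_nonneg : 0 ≤ ∏ i ∈ Finset.range n, c i :=
    Finset.prod_nonneg fun i _ => zero_le_one.trans (hc i)
  have hprod_le : ∏ i ∈ Finset.range n, c i ≤ M := hM ⟨n, rfl⟩
  calc ∑ i ∈ Finset.range n, D i
      ≤ Q n + ∑ i ∈ Finset.range n, D i := le_add_of_nonneg_left (hQ n)
    _ ≤ (∏ i ∈ Finset.range n, c i) * (Q 0 + ∑ i ∈ Finset.range n, f i) :=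
      add_sum_range_le_prod_mul hD hf hc h n
    _ ≤ M * (Q 0 + ∑' i, f i) :=
      mul_le_mul hprod_le (by gcongr; exact hf_sum.sum_le_tsum _ fun i _ => hf i)
        (add_nonneg (hQ 0) hsum_nonneg) (hprod_nonneg.trans hprod_le)

end QuasiFejer

theorem tendsto_of_summable_mul_norm_sub_sq {E : Type*} [SeminormedAddCommGroup E] {u : ℕ → E}
    {l : E} {w : ℕ → ℝ} {r : ℝ} (hr : 0 < r) (hw : ∀ k, r ≤ w k)
    (h : Summable fun k => w k * ‖u k - l‖ ^ 2) : Tendsto u atTop (nhds l) := by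
  have hsq : Summable fun k => r * ‖u k - l‖ ^ 2 :=
    h.of_nonneg_of_le (fun k => by positivity) fun k => by gcongr; exact hw k
  have hzero := ((summable_mul_left_iff hr.ne').mp hsq).tendsto_atTop_zero
  exact tendsto_iff_norm_sub_tendsto_zero.mpr (by simpa using hzero.sqrt)

section VariableMetric

variable {H : Type*} [NormedAddCommGroup H] [InnerProductSpace ℝ H]

section PositiveOperators

variable {T : H →L[ℝ] H}

theorem isPositive_of_mul_norm_sq_le {α : ℝ} (hT : T.IsSymmetric) (hα : 0 ≤ α)
    (hTα : ∀ x, α * ‖x‖ ^ 2 ≤ ⟪T x, x⟫) : T.IsPositive :=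
  ⟨hT, fun x => (by positivity : 0 ≤ α * ‖x‖ ^ 2).trans (hTα x)⟩

theorem inner_map_sq_le_of_isPositive (hT : T.IsPositive) (x y : H) :
    ⟪T x, y⟫ ^ 2 ≤ ⟪T x, x⟫ * ⟪T y, y⟫ :=
  LinearMap.BilinForm.apply_sq_le_of_symm (innerₗ H ∘ₗ (T : H →ₗ[ℝ] H)) hT.inner_nonneg_left
    ⟨fun x y => (hT.inner_left_eq_inner_right x y).trans (real_inner_comm _ _)⟩ x y

theorem norm_map_sq_le_of_isPositive (hT : T.IsPositive) (x : H) :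
    ‖T x‖ ^ 2 ≤ ‖T‖ * ⟪T x, x⟫ := by
  have hx : 0 ≤ ⟪T x, x⟫ := hT.inner_nonneg_left x
  have hTT : ⟪T (T x), T x⟫ ≤ ‖T‖ * ‖T x‖ ^ 2 :=
    calc ⟪T (T x), T x⟫ ≤ ‖T (T x)‖ * ‖T x‖ := real_inner_le_norm _ _
      _ ≤ ‖T‖ * ‖T x‖ * ‖T x‖ := by gcongr; exact T.le_opNorm _
      _ = ‖T‖ * ‖T x‖ ^ 2 := by ring
  have hsq : ‖T x‖ ^ 2 * ‖T x‖ ^ 2 ≤ ‖T‖ * ⟪T x, x⟫ * ‖T x‖ ^ 2 :=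
    calc ‖T x‖ ^ 2 * ‖T x‖ ^ 2 = ⟪T x, T x⟫ ^ 2 := by rw [real_inner_self_eq_norm_sq]; ring
      _ ≤ ⟪T x, x⟫ * ⟪T (T x), T x⟫ := inner_map_sq_le_of_isPositive hT _ _
      _ ≤ ⟪T x, x⟫ * (‖T‖ * ‖T x‖ ^ 2) := by gcongr
      _ = ‖T‖ * ⟪T x, x⟫ * ‖T x‖ ^ 2 := by ring
  exact le_of_sq_le_mul (by positivity) ((sq _).trans_le hsq)

end PositiveOperators

section InverseMetric

/-- The squared norm `‖x‖²_{U⁻¹} = ⟪U⁻¹ x, x⟫` of the variable metric induced by the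
preconditioner `U`, in which the iterates are compared. -/
def invNormSq (U : H ≃L[ℝ] H) (x : H) : ℝ := ⟪U.symm x, x⟫

variable {U : H ≃L[ℝ] H}

theorem inner_symm_left (hU : (U : H →L[ℝ] H).IsSymmetric) (x y : H) :
    ⟪U.symm x, y⟫ = ⟪x, U.symm y⟫ := by
  simpa using (hU (U.symm x) (U.symm y)).symm

theorem invNormSq_nonneg (hU : (U : H →L[ℝ] H).IsPositive) (x : H) : 0 ≤ invNormSq U x := by
  simpa [invNormSq] using hU.inner_nonneg_right (U.symm x)

theorem norm_sq_le_opNorm_mul_invNormSq (hU : (U : H →L[ℝ] H).IsPositive) (x : H) :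
    ‖x‖ ^ 2 ≤ ‖(U : H →L[ℝ] H)‖ * invNormSq U x := by
  simpa [invNormSq, real_inner_comm] using norm_map_sq_le_of_isPositive hU (U.symm x)

theorem invNormSq_add (hU : (U : H →L[ℝ] H).IsSymmetric) (x y : H) :
    invNormSq U (x + y) = invNormSq U x + 2 * ⟪x, U.symm y⟫ + invNormSq U y := by
  have hyx : ⟪U.symm y, x⟫ = ⟪x, U.symm y⟫ := real_inner_comm _ _
  simp only [invNormSq, map_add, inner_add_left, inner_add_right, inner_symm_left hU x y, hyx]
  ring

theorem invNormSq_smul (t : ℝ) (x : H) : invNormSq U (t • x) = t ^ 2 * invNormSq U x := by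
  simp only [invNormSq, map_smul, real_inner_smul_left, real_inner_smul_right]
  ring

theorem invNormSq_le_mul_of_inner_le_mul {U' : H ≃L[ℝ] H} (hU : (U : H →L[ℝ] H).IsPositive)
    {r : ℝ} (hr : 0 ≤ r) (h : ∀ z, ⟪U z, z⟫ ≤ r * ⟪U' z, z⟫) (x : H) :
    invNormSq U' x ≤ r * invNormSq U x := by
  refine le_of_sq_le_mul (mul_nonneg hr (invNormSq_nonneg hU x)) ?_
  calc invNormSq U' x ^ 2
      = ⟪U (U.symm x), U'.symm x⟫ ^ 2 := by simp [invNormSq, real_inner_comm]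
    _ ≤ ⟪U (U.symm x), U.symm x⟫ * ⟪U (U'.symm x), U'.symm x⟫ :=
      inner_map_sq_le_of_isPositive hU _ _
    _ ≤ ⟪U (U.symm x), U.symm x⟫ * (r * ⟪U' (U'.symm x), U'.symm x⟫) :=
      mul_le_mul_of_nonneg_left (h _) (hU.inner_nonneg_left _)
    _ = r * invNormSq U x * invNormSq U' x := by
      simp only [ContinuousLinearEquiv.apply_symm_apply, invNormSq, real_inner_comm]
      ring

variable {α : ℝ}

theorem mul_norm_symm_sq_le_invNormSq (hUα : ∀ x, α * ‖x‖ ^ 2 ≤ ⟪U x, x⟫) (x : H) :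
    α * ‖U.symm x‖ ^ 2 ≤ invNormSq U x := by
  simpa [invNormSq, real_inner_comm] using hUα (U.symm x)

theorem invNormSq_le_norm_sq_div (hα : 0 < α) (hUα : ∀ x, α * ‖x‖ ^ 2 ≤ ⟪U x, x⟫) (x : H) :
    invNormSq U x ≤ ‖x‖ ^ 2 / α := by
  have hcs : invNormSq U x ≤ ‖U.symm x‖ * ‖x‖ := real_inner_le_norm _ _
  rw [le_div_iff₀ hα]
  nlinarith [mul_norm_symm_sq_le_invNormSq hUα x, sq_nonneg (α * ‖U.symm x‖ - ‖x‖)]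

theorem invNormSq_add_le (hU : (U : H →L[ℝ] H).IsSymmetric) (hα : 0 < α)
    (hUα : ∀ x, α * ‖x‖ ^ 2 ≤ ⟪U x, x⟫) (x g : H) :
    invNormSq U (x + g) ≤ (1 + ‖g‖) * (invNormSq U x + ‖g‖ / α) := by
  have hyoung : 2 * ‖U.symm x‖ ≤ α * ‖U.symm x‖ ^ 2 + 1 / α := by
    have hsq : α * (‖U.symm x‖ - 1 / α) ^ 2
        = α * ‖U.symm x‖ ^ 2 - 2 * ‖U.symm x‖ + 1 / α := by
      field_simp
      ring
    linarith [mul_nonneg hα.le (sq_nonneg (‖U.symm x‖ - 1 / α))]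
  have hcross : 2 * ⟪x, U.symm g⟫ ≤ ‖g‖ * (invNormSq U x + 1 / α) :=
    calc 2 * ⟪x, U.symm g⟫ = 2 * ⟪U.symm x, g⟫ := by rw [inner_symm_left hU]
      _ ≤ 2 * (‖U.symm x‖ * ‖g‖) := by gcongr; exact real_inner_le_norm _ _
      _ = ‖g‖ * (2 * ‖U.symm x‖) := by ring
      _ ≤ ‖g‖ * (invNormSq U x + 1 / α) := by
        gcongr
        linarith [mul_norm_symm_sq_le_invNormSq hUα x]
  calc invNormSq U (x + g)
      = invNormSq U x + 2 * ⟪x, U.symm g⟫ + invNormSq U g := invNormSq_add hU x g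
    _ ≤ invNormSq U x + ‖g‖ * (invNormSq U x + 1 / α) + ‖g‖ ^ 2 / α := by
      gcongr
      exact invNormSq_le_norm_sq_div hα hUα g
    _ = (1 + ‖g‖) * (invNormSq U x + ‖g‖ / α) := by ring

end InverseMetric

section ForwardBackward

/-- Cocoercivity with constant `β` of the forward operator `B`. -/
def IsCocoerciveWith (β : ℝ) (B : H → H) : Prop :=
  ∀ x y, β * ‖B x - B y‖ ^ 2 ≤ ⟪x - y, B x - B y⟫

/-- Monotonicity of the backward operator `A`, a set-valued operator encoded as a map into
`Set H`. -/
def IsMonotoneOperator (A : H → Set H) : Prop :=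
  ∀ x y u v, u ∈ A x → v ∈ A y → 0 ≤ ⟪x - y, u - v⟫

/-- `J` is a resolvent of `γ U A`, that is, `y - J y ∈ γ U (A (J y))` for all `y`. The inclusion
is solved for the element of `A (J y)`, which presupposes `γ ≠ 0`. -/
def IsResolvent (γ : ℝ) (U : H ≃L[ℝ] H) (A : H → Set H) (J : H → H) : Prop :=
  ∀ y, (1 / γ) • U.symm (y - J y) ∈ A (J y)

/-- One relaxed forward-backward step from `x` with relaxation parameter `lam`, error `a` in the
resolvent and error `b` in `B`; the exact step is the case `a = b = 0`. -/
def fbStep (U : H ≃L[ℝ] H) (B J : H → H) (γ lam : ℝ) (a b x : H) : H :=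
  x + lam • (J (x - γ • U (B x + b)) + a - x)

variable {U : H ≃L[ℝ] H} {A : H → Set H} {B J : H → H} {β γ lam κ : ℝ}

theorem IsResolvent.inner_nonneg (hJ : IsResolvent γ U A J) (hA : IsMonotoneOperator A)
    (hγ : 0 < γ) {z v : H} (hv : v ∈ A z) (y : H) :
    0 ≤ ⟪J y - z, U.symm (y - J y) - γ • v⟫ := by
  have hscale : U.symm (y - J y) - γ • v = γ • ((1 / γ) • U.symm (y - J y) - v) := by
    rw [smul_sub, smul_smul, mul_one_div_cancel hγ.ne', one_smul]
  rw [hscale, real_inner_smul_right]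
  exact mul_nonneg hγ.le (hA _ _ _ _ (hJ y) hv)

theorem IsResolvent.norm_sub_le (hJ : IsResolvent γ U A J) (hA : IsMonotoneOperator A)
    (hU : (U : H →L[ℝ] H).IsPositive) (hγ : 0 < γ) (y z : H) :
    ‖J y - J z‖ ≤ ‖(U : H →L[ℝ] H)‖ * ‖U.symm (y - z)‖ := by
  have hfirm : invNormSq U (J y - J z) ≤ ⟪J y - J z, U.symm (y - z)⟫ := by
    have h := hJ.inner_nonneg hA hγ (hJ z) y
    have hsplit : U.symm (y - J y) - γ • (1 / γ) • U.symm (z - J z)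
        = U.symm (y - z) - U.symm (J y - J z) := by
      rw [smul_smul, mul_one_div_cancel hγ.ne', one_smul, ← map_sub, ← map_sub]
      congr 1
      abel
    rw [hsplit, inner_sub_right] at h
    rw [invNormSq, real_inner_comm]
    linarith
  refine le_of_sq_le_mul (by positivity) ?_
  calc ‖J y - J z‖ ^ 2
      ≤ ‖(U : H →L[ℝ] H)‖ * invNormSq U (J y - J z) := norm_sq_le_opNorm_mul_invNormSq hU _
    _ ≤ ‖(U : H →L[ℝ] H)‖ * (‖J y - J z‖ * ‖U.symm (y - z)‖) := by
      gcongr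
      exact hfirm.trans (real_inner_le_norm _ _)
    _ = ‖(U : H →L[ℝ] H)‖ * ‖U.symm (y - z)‖ * ‖J y - J z‖ := by ring

theorem norm_fbStep_sub_fbStep_zero_le (hJ : IsResolvent γ U A J) (hA : IsMonotoneOperator A)
    (hU : (U : H →L[ℝ] H).IsPositive) (hγ : 0 < γ) (hlam : 0 ≤ lam) (a b x : H) :
    ‖fbStep U B J γ lam a b x - fbStep U B J γ lam 0 0 x‖ ≤
      lam * ‖a‖ + γ * ‖(U : H →L[ℝ] H)‖ * (lam * ‖b‖) := by
  set y := x - γ • U (B x + b)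
  set y₀ := x - γ • U (B x)
  have hdiff : fbStep U B J γ lam a b x - fbStep U B J γ lam 0 0 x
      = lam • (a + (J y - J y₀)) := by
    simp only [fbStep, add_zero, y, y₀]
    module
  have hy : U.symm (y - y₀) = -(γ • b) := by
    have : y - y₀ = -(γ • U b) := by
      simp only [y, y₀, map_add]
      module
    rw [this, map_neg, map_smul, U.symm_apply_apply]
  have hJy : ‖J y - J y₀‖ ≤ ‖(U : H →L[ℝ] H)‖ * (γ * ‖b‖) := by
    simpa only [hy, norm_neg, norm_smul, Real.norm_of_nonneg hγ.le]
      using hJ.norm_sub_le hA hU hγ y y₀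
  calc ‖fbStep U B J γ lam a b x - fbStep U B J γ lam 0 0 x‖
      = lam * ‖a + (J y - J y₀)‖ := by rw [hdiff, norm_smul, Real.norm_of_nonneg hlam]
    _ ≤ lam * (‖a‖ + ‖(U : H →L[ℝ] H)‖ * (γ * ‖b‖)) := by
      gcongr
      exact (norm_add_le _ _).trans (by gcongr)
    _ = lam * ‖a‖ + γ * ‖(U : H →L[ℝ] H)‖ * (lam * ‖b‖) := by ring

theorem summable_norm_fbStep_sub_fbStep_zero {U : ℕ → H ≃L[ℝ] H} {J : ℕ → H → H} {γ lam : ℕ → ℝ}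
    {r : ℝ} {a b : ℕ → H} (hJ : ∀ k, IsResolvent (γ k) (U k) A (J k)) (hA : IsMonotoneOperator A)
    (hU : ∀ k, (U k : H →L[ℝ] H).IsPositive) (hγ : ∀ k, 0 < γ k) (hlam : ∀ k, 0 ≤ lam k)
    (hγU : ∀ k, γ k * ‖(U k : H →L[ℝ] H)‖ ≤ r)
    (ha : Summable fun k => lam k * ‖a k‖) (hb : Summable fun k => lam k * ‖b k‖) (x : ℕ → H) :
    Summable fun k => ‖fbStep (U k) B (J k) (γ k) (lam k) (a k) (b k) (x k) -
      fbStep (U k) B (J k) (γ k) (lam k) 0 0 (x k)‖ := by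
  refine .of_nonneg_of_le (fun k => norm_nonneg _) (fun k => ?_) (ha.add (hb.mul_left r))
  refine (norm_fbStep_sub_fbStep_zero_le (hJ k) hA (hU k) (hγ k) (hlam k) _ _ _).trans ?_
  have := hlam k
  gcongr
  exact hγU k

theorem inner_sub_symm_forwardBackward_le (hJ : IsResolvent γ U A J) (hA : IsMonotoneOperator A)
    (hB : IsCocoerciveWith β B) (hγ : 0 < γ) {z : H} (hz : -B z ∈ A z) (x : H) {q : H}
    (hq : q = J (x - γ • U (B x)) - x) :
    ⟪x - z, U.symm q⟫ ≤
      -invNormSq U q - γ * β * ‖B x - B z‖ ^ 2 + γ * (‖q‖ * ‖B x - B z‖) := by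
  have hmono := hJ.inner_nonneg hA hγ hz (x - γ • U (B x))
  have hJx : J (x - γ • U (B x)) = x + q := by rw [hq]; abel
  have hleft : x + q - z = (x - z) + q := by abel
  have hright : U.symm (x - γ • U (B x) - (x + q)) - γ • -B z
      = -U.symm q - γ • (B x - B z) := by
    have : x - γ • U (B x) - (x + q) = -q - γ • U (B x) := by abel
    rw [this, map_sub, map_neg, map_smul, U.symm_apply_apply]
    module
  rw [hJx, hleft, hright, inner_sub_right, inner_neg_right, real_inner_smul_right,
    inner_add_left, inner_add_left, real_inner_comm (U.symm q) q] at hmono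
  have hcoco : γ * (β * ‖B x - B z‖ ^ 2) ≤ γ * ⟪x - z, B x - B z⟫ := by
    gcongr
    exact hB x z
  have hcross : γ * -⟪q, B x - B z⟫ ≤ γ * (‖q‖ * ‖B x - B z‖) := by
    gcongr
    exact (neg_le_abs _).trans (abs_real_inner_le_norm _ _)
  rw [invNormSq]
  linarith

theorem two_mul_sq_mul_sq_le_add_sq (hκ : 0 ≤ κ) (hκγ : κ ≤ γ / (2 * β)) (d q : ℝ) :
    2 * β ^ 2 * κ * d ^ 2 ≤ γ / (2 * β) * (2 * β * d - q) ^ 2 + κ * q ^ 2 :=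
  calc 2 * β ^ 2 * κ * d ^ 2 ≤ κ * (2 * β * d - q) ^ 2 + κ * q ^ 2 := by
        nlinarith [mul_nonneg hκ (sq_nonneg (β * d - q))]
    _ ≤ γ / (2 * β) * (2 * β * d - q) ^ 2 + κ * q ^ 2 := by gcongr

theorem invNormSq_fbStep_zero_sub_add_le (hJ : IsResolvent γ U A J) (hA : IsMonotoneOperator A)
    (hB : IsCocoerciveWith β B) (hβ : 0 < β) (hU : (U : H →L[ℝ] H).IsPositive) (hγ : 0 < γ)
    (hκ : 0 ≤ κ) (hκγ : κ ≤ γ / (2 * β)) (hlam : 0 ≤ lam)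
    (hlamκ : (γ / (2 * β) + κ) * ‖(U : H →L[ℝ] H)‖ ≤ 2 - lam)
    {z : H} (hz : -B z ∈ A z) (x : H) :
    invNormSq U (fbStep U B J γ lam 0 0 x - z) + 2 * β ^ 2 * κ * lam * ‖B x - B z‖ ^ 2 ≤
      invNormSq U (x - z) := by
  set q := J (x - γ • U (B x)) - x with hq
  set d := ‖B x - B z‖
  have hstep : fbStep U B J γ lam 0 0 x - z = (x - z) + lam • q := by
    simp only [fbStep, add_zero, hq]
    abel
  have hinner := inner_sub_symm_forwardBackward_le hJ hA hB hγ hz x hq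
  have hnorm : (γ / (2 * β) + κ) * ‖q‖ ^ 2 ≤ (2 - lam) * invNormSq U q :=
    calc (γ / (2 * β) + κ) * ‖q‖ ^ 2
        ≤ (γ / (2 * β) + κ) * (‖(U : H →L[ℝ] H)‖ * invNormSq U q) := by
          gcongr
          exact norm_sq_le_opNorm_mul_invNormSq hU q
      _ = (γ / (2 * β) + κ) * ‖(U : H →L[ℝ] H)‖ * invNormSq U q := by ring
      _ ≤ (2 - lam) * invNormSq U q := by
          gcongr
          exact invNormSq_nonneg hU q
  have hsquare : γ / (2 * β) * (2 * β * d - ‖q‖) ^ 2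
      = 2 * (γ * β * d ^ 2) - 2 * (γ * (‖q‖ * d)) + γ / (2 * β) * ‖q‖ ^ 2 := by
    field_simp
    ring
  have hdecrease : 2 * ⟪x - z, U.symm q⟫ + lam * invNormSq U q ≤ -(2 * β ^ 2 * κ * d ^ 2) := by
    linarith [two_mul_sq_mul_sq_le_add_sq hκ hκγ d ‖q‖]
  rw [hstep, invNormSq_add hU.isSymmetric, invNormSq_smul, map_smul, real_inner_smul_right]
  linarith [mul_le_mul_of_nonneg_left hdecrease hlam]

theorem invNormSq_fbStep_sub_add_le {U' : H ≃L[ℝ] H} {α η : ℝ} (hJ : IsResolvent γ U A J)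
    (hA : IsMonotoneOperator A) (hB : IsCocoerciveWith β B) (hβ : 0 < β)
    (hU : (U : H →L[ℝ] H).IsPositive) (hα : 0 < α) (hUα : ∀ x, α * ‖x‖ ^ 2 ≤ ⟪U x, x⟫)
    (hη : 0 ≤ η) (hUU' : ∀ x, ⟪U x, x⟫ ≤ (1 + η) * ⟪U' x, x⟫) (hγ : 0 < γ)
    (hκ : 0 ≤ κ) (hκγ : κ ≤ γ / (2 * β)) (hlam : 0 ≤ lam)
    (hlamκ : (γ / (2 * β) + κ) * ‖(U : H →L[ℝ] H)‖ ≤ 2 - lam)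
    {z : H} (hz : -B z ∈ A z) (a b x : H) {e : ℝ}
    (he : e = ‖fbStep U B J γ lam a b x - fbStep U B J γ lam 0 0 x‖) :
    invNormSq U' (fbStep U B J γ lam a b x - z) + 2 * β ^ 2 * κ * lam * ‖B x - B z‖ ^ 2 ≤
      (1 + η) * (1 + e) * (invNormSq U (x - z) + e / α) := by
  set y := fbStep U B J γ lam a b x
  set y₀ := fbStep U B J γ lam 0 0 x
  set E := 2 * β ^ 2 * κ * lam * ‖B x - B z‖ ^ 2
  have hE : 0 ≤ E := by positivity
  have he₀ : 0 ≤ e := he ▸ norm_nonneg _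
  have hexact : invNormSq U (y₀ - z) + E ≤ invNormSq U (x - z) :=
    invNormSq_fbStep_zero_sub_add_le hJ hA hB hβ hU hγ hκ hκγ hlam hlamκ hz x
  have herror : invNormSq U (y - z) ≤ (1 + e) * (invNormSq U (y₀ - z) + e / α) := by
    rw [he, ← sub_add_sub_cancel' y₀ z y]
    exact invNormSq_add_le hU.isSymmetric hα hUα _ _
  have hfactor : 1 ≤ (1 + η) * (1 + e) :=
    one_le_mul_of_one_le_of_one_le (by linarith) (by linarith)
  calc invNormSq U' (y - z) + E
      ≤ (1 + η) * invNormSq U (y - z) + (1 + η) * (1 + e) * E :=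
        add_le_add (invNormSq_le_mul_of_inner_le_mul hU (by linarith) hUU' _)
          (le_mul_of_one_le_left hE hfactor)
    _ ≤ (1 + η) * ((1 + e) * (invNormSq U (y₀ - z) + e / α)) + (1 + η) * (1 + e) * E := by gcongr
    _ = (1 + η) * (1 + e) * (invNormSq U (y₀ - z) + E + e / α) := by ring
    _ ≤ (1 + η) * (1 + e) * (invNormSq U (x - z) + e / α) := by gcongr

theorem exists_pos_forall_relaxation_le {ι : Type*} {β μ γlb τ : ℝ} {γ lam m : ι → ℝ} (hβ : 0 < β)
    (hμ : 0 < μ) (hγlb : 0 < γlb) (hτ : 0 < τ) (hm : ∀ k, m k ≤ μ) (hγ : ∀ k, γlb ≤ γ k)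
    (hlam : ∀ k, lam k ≤ (4 * β - γ k * m k) / (2 * β) - τ) :
    ∃ κ > 0, (∀ k, κ ≤ γ k / (2 * β)) ∧ ∀ k, (γ k / (2 * β) + κ) * m k ≤ 2 - lam k := by
  set κ := min (γlb / (2 * β)) (τ / μ)
  have hκ : 0 < κ := lt_min (by positivity) (by positivity)
  refine ⟨κ, hκ, fun k => (min_le_left _ _).trans (by gcongr; exact hγ k), fun k => ?_⟩
  have hκm : κ * m k ≤ τ :=
    calc κ * m k ≤ κ * μ := by gcongr; exact hm k
      _ ≤ τ / μ * μ := by gcongr; exact min_le_right _ _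
      _ = τ := div_mul_cancel₀ τ hμ.ne'
  have hsplit : (4 * β - γ k * m k) / (2 * β) = 2 - γ k / (2 * β) * m k := by
    field_simp
    ring
  linarith [hlam k]

theorem fb_B_strong_convergence_general
    {β : ℝ} (hβ : 0 < β) {B : H → H} (hB : IsCocoerciveWith β B)
    {A : H → Set H} (hA : IsMonotoneOperator A)
    {α : ℝ} (hα : 0 < α) {μ : ℝ} (hμ : 0 < μ) {U : ℕ → H ≃L[ℝ] H}
    (hU : ∀ k, (U k : H →L[ℝ] H).IsSymmetric) (hUα : ∀ k x, α * ‖x‖ ^ 2 ≤ ⟪U k x, x⟫)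
    (hUμ : ∀ k, ‖(U k : H →L[ℝ] H)‖ ≤ μ)
    {η : ℕ → ℝ} (hη : ∀ k, 0 ≤ η k) (hη_sum : Summable η)
    (hU_succ : ∀ k x, ⟪U k x, x⟫ ≤ (1 + η k) * ⟪U (k + 1) x, x⟫)
    {γ lam : ℕ → ℝ} {γlb : ℝ} (hγlb : 0 < γlb) (hγ : ∀ k, γlb ≤ γ k)
    {lamlb τ : ℝ} (hlamlb : 0 < lamlb) (hτ : 0 < τ)
    (hlam : ∀ k, lamlb ≤ lam k ∧
      lam k ≤ (4 * β - γ k * ‖(U k : H →L[ℝ] H)‖) / (2 * β) - τ)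
    {a b : ℕ → H} (ha : Summable fun k => lam k * ‖a k‖) (hb : Summable fun k => lam k * ‖b k‖)
    {J : ℕ → H → H} (hJ : ∀ k, IsResolvent (γ k) (U k) A (J k))
    {x : ℕ → H} (hx : ∀ k, x (k + 1) = fbStep (U k) B (J k) (γ k) (lam k) (a k) (b k) (x k))
    {z : H} (hz : ∃ u ∈ A z, u + B z = 0) :
    Tendsto (fun k => B (x k)) atTop (nhds (B z)) := by
  have hz' : -B z ∈ A z := by
    obtain ⟨u, hu, huB⟩ := hz
    rwa [← eq_neg_of_add_eq_zero_left huB]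
  have hγ_pos k : 0 < γ k := hγlb.trans_le (hγ k)
  have hlam_pos k : 0 < lam k := hlamlb.trans_le (hlam k).1
  have hU_pos k := isPositive_of_mul_norm_sq_le (hU k) hα.le (hUα k)
  have hγU k : γ k * ‖(U k : H →L[ℝ] H)‖ ≤ 4 * β := by
    have hpos : 0 < (4 * β - γ k * ‖(U k : H →L[ℝ] H)‖) / (2 * β) := by
      linarith [hlam_pos k, (hlam k).2]
    linarith [(div_pos_iff_of_pos_right (mul_pos two_pos hβ)).mp hpos]
  obtain ⟨κ, hκ, hκγ, hlamκ⟩ :=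
    exists_pos_forall_relaxation_le hβ hμ hγlb hτ hUμ hγ fun k => (hlam k).2
  set e : ℕ → ℝ := fun k => ‖fbStep (U k) B (J k) (γ k) (lam k) (a k) (b k) (x k) -
    fbStep (U k) B (J k) (γ k) (lam k) 0 0 (x k)‖
  have he k : 0 ≤ e k := norm_nonneg _
  have he_sum : Summable e := summable_norm_fbStep_sub_fbStep_zero hJ hA hU_pos hγ_pos
    (fun k => (hlam_pos k).le) hγU ha hb x
  refine tendsto_of_summable_mul_norm_sub_sq (r := 2 * β ^ 2 * κ * lamlb) (by positivity)
    (fun k => mul_le_mul_of_nonneg_left (hlam k).1 (by positivity)) ?_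
  refine summable_of_add_le_mul_add (fun k => invNormSq_nonneg (hU_pos k) (x k - z))
    (fun k => ?_) (fun k => div_nonneg (he k) hα.le)
    (fun k => one_le_mul_of_one_le_of_one_le (le_add_of_nonneg_right (hη k))
      (le_add_of_nonneg_right (he k)))
    ((Real.multipliable_one_add_of_summable hη_sum).mul
      (Real.multipliable_one_add_of_summable he_sum)) (he_sum.div_const α) fun k => ?_
  · have := hlam_pos k
    positivity
  · rw [hx k]
    exact invNormSq_fbStep_sub_add_le (hJ k) hA hB hβ (hU_pos k) hα (hUα k) (hη k) (hU_succ k)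
      (hγ_pos k) hκ.le (hκγ k) (hlam_pos k).le (hlamκ k) hz' (a k) (b k) (x k) rfl

end ForwardBackward

end VariableMetric

theorem fb_B_strong_convergence
    {H : Type*} [NormedAddCommGroup H] [InnerProductSpace ℝ H] [CompleteSpace H]
    (β : ℝ) (hβ : 0 < β) (B : H → H)
    (hB : ∀ x y : H, ⟪x - y, B x - B y⟫ ≥ β * ‖B x - B y‖ ^ 2)
    (A : H → Set H)
    (hAmono : ∀ x y u v : H, u ∈ A x → v ∈ A y → ⟪x - y, u - v⟫ ≥ 0)
    (hAmax : ∀ z w : H, (∀ x : H, ∀ u ∈ A x, ⟪x - z, u - w⟫ ≥ 0) → w ∈ A z)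
    (hΩ : {z : H | ∃ u ∈ A z, u + B z = 0}.Nonempty)
    (α : ℝ) (hα : 0 < α) (μ : ℝ) (hμ : 0 < μ)
    (U V : ℕ → H →L[ℝ] H)
    (hU : ∀ k, IsSelfAdjoint (U k))
    (hUpos : ∀ k, ∀ x : H, ⟪U k x, x⟫ ≥ α * ‖x‖ ^ 2)
    (hV : ∀ k, IsSelfAdjoint (V k))
    (hVU : ∀ k, (V k).comp (U k) = ContinuousLinearMap.id ℝ H)
    (hUV : ∀ k, (U k).comp (V k) = ContinuousLinearMap.id ℝ H)
    (hUnorm : ∀ k, ‖U k‖ ≤ μ)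
    (η : ℕ → ℝ) (hη0 : ∀ k, 0 ≤ η k) (hηsum : Summable η)
    (hUmono : ∀ k, ∀ z : H, (1 + η k) * ⟪U (k + 1) z, z⟫ ≥ ⟪U k z, z⟫)
    (γ lam αk : ℕ → ℝ)
    (hγ : ∀ k, 0 < γ k ∧ γ k < 2 * β / ‖U k‖)
    (hαk : ∀ k, αk k = 2 * β / (4 * β - γ k * ‖U k‖))
    (hlam : ∀ k, 0 < lam k ∧ lam k < 1 / αk k)
    (a b : ℕ → H)
    (ha : Summable (fun k => lam k * ‖a k‖))
    (hb : Summable (fun k => lam k * ‖b k‖))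
    (J : ℕ → H → H)
    (hJ : ∀ k, ∀ y : H, (1 / γ k) • (V k (y - J k y)) ∈ A (J k y))
    (x : ℕ → H)
    (hx : ∀ k, x (k + 1) =
      x k + lam k • (J k (x k - γ k • U k (B (x k) + b k)) + a k - x k))
    (lamlb τ : ℝ) (hlamlb : 0 < lamlb) (hτ : 0 < τ)
    (hlam' : ∀ k, lamlb ≤ lam k ∧ lam k ≤ 1 / αk k - τ)
    (γlb : ℝ) (hγlb : 0 < γlb) (hγ' : ∀ k, γlb ≤ γ k)
    (ε : ℝ) (hε : 0 < ε ∧ ε < 2 * β - μ * γlb)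
    (hγub : ∀ k, γ k ≤ (2 * β - ε) / μ) :
    ∀ xs ∈ {z : H | ∃ u ∈ A z, u + B z = 0},
      Tendsto (fun k => B (x k)) atTop (nhds (B xs)) := by
  simp only [hαk, one_div_div] at hlam'
  exact fun xs hxs => fb_B_strong_convergence_general hβ hB hAmono hα hμ
    (U := fun k => .equivOfInverse' (U k) (V k) (hUV k) (hVU k))
    (fun k => (hU k).isSymmetric) hUpos hUnorm hη0 hηsum hUmono hγlb hγ' hlamlb hτ
    hlam' ha hb hJ hx hxs
end
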